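/- Let {G, (Γ0, Γ1), (Γ̃0, Γ̃1)} be a generalized boundary triple for the adjoint pair {S, S̃} with core {T, T̃} of {S*, S̃*}, assume ρ(A0) ≠ ∅, and let γ and M be the associated γ-field and Weyl function. Let B be a closable linear operator in G such that {Γ1 f : f ∈ dom T, Γ0 f = 0} ⊆ dom B, and suppose that for some λ0 ∈ ρ(A0) one has 1 ∈ ρ(B M(λ0)), i.e., the operator h ↦ h − B M(λ0)h with domain {h ∈ G : M(λ0)h ∈ dom B} is injective, has range equal to G, and has bounded inverse. Then A_B is a closed operator in H, λ0 ∈ ρ(A_B), and the Krein-type resolvent formula holds: for every λ ∈ ρ(A0) ∩ ρ(A_B) and every f ∈ H one has Γ1 (A0 − λ)^{-1} f ∈ dom B, there exists a unique h ∈ G with M(λ)h ∈ dom B and h − B M(λ)h = B Γ1 (A0 − λ)^{-1} f, and (A_B − λ)^{-1} f = (A0 − λ)^{-1} f + γ(λ)h. -/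

import Mathlib

/-!
Krein-type resolvent formula for the restriction `A_B = {T f : B Γ1 f = Γ0 f}`.

An element `x` of `dom T` solves `(T - λ) x = f` if and only if `x = u + γ(λ) h` with
`u = (A0 - λ)⁻¹ f` and `h = Γ0 x`; the boundary condition `B Γ1 x = Γ0 x` then reads
`h - B M(λ) h = B Γ1 u`, because `Γ1 u ∈ dom B` by the range assumption. This algebra
(`sub_eq_gamma`, `mem_bc_iff`) gives the formula at every `λ ∈ ρ(A0) ∩ ρ(A_B)`, and at `λ0` it shows
that `A_B - λ0` is a bijection with inverse
`(A0 - λ0)⁻¹ + γ(λ0) (1 - B M(λ0))⁻¹ B Γ1 (A0 - λ0)⁻¹`.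

The analytic content is the boundedness of the factors, obtained from the closed graph theorem:
* `Γ1 (A0 - λ)⁻¹` is closed by Green's identity and surjectivity of `Γt0`
  (`continuous_gamma1_resolvent`);
* `B Γ1 (A0 - λ)⁻¹` is everywhere defined and closable (`continuous_B_gamma1_resolvent`);
* `γ(λ)` is closed by Green's identity and `(Ã0)* = A0` (`continuous_gamma`).

An operator with a bounded everywhere defined resolvent is closed (`ResolventAt.isClosed`).
-/

open scoped ComplexInnerProductSpace

noncomputable section

/-- The inner product in the convention of the paper: linear in the *first* argument and
conjugate-linear in the second (the opposite of Mathlib's convention). -/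
def pinner {E : Type*} [NormedAddCommGroup E] [InnerProductSpace ℂ E] (x y : E) : ℂ :=
  ⟪y, x⟫

variable {H G : Type*}
  [NormedAddCommGroup H] [InnerProductSpace ℂ H] [CompleteSpace H]
  [NormedAddCommGroup G] [InnerProductSpace ℂ G] [CompleteSpace G]

/-- The restriction of a partially defined linear operator `T` in `H` to a submodule `p` of its
domain, viewed again as a partially defined linear operator in `H`. -/
def LinearPMap.restrictTo (T : H →ₗ.[ℂ] H) (p : Submodule ℂ T.domain) : H →ₗ.[ℂ] H where
  domain := p.map T.domain.subtype
  toFun := T.toFun ∘ₗ p.subtype ∘ₗ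
    (Submodule.equivMapOfInjective T.domain.subtype (Submodule.injective_subtype _)
      p).symm.toLinearMap

/-- `R` is the (everywhere defined, bounded) resolvent of the operator `A` at the point `lam`,
i.e. `R` is a two-sided inverse of `A - lam`. -/
def ResolventAt (A : H →ₗ.[ℂ] H) (lam : ℂ) (R : H →L[ℂ] H) : Prop :=
  (∀ x : A.domain, R (A x - lam • (x : H)) = (x : H)) ∧
  (∀ h : H, ∃ x : A.domain, (x : H) = R h ∧ A x - lam • (x : H) = h)

/-- `lam` belongs to the resolvent set of `A`: `A - lam` is a bijection of `dom A` onto `H`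
with a bounded everywhere defined inverse. -/
def InResolventSet (A : H →ₗ.[ℂ] H) (lam : ℂ) : Prop :=
  ∃ R : H →L[ℂ] H, ResolventAt A lam R

/-- `{G, (Γ0, Γ1), (Γt0, Γt1)}` is a generalized boundary triple for the adjoint pair `{S, St}`
with core `{T, Tt}` of `{S*, St*}`. -/
structure IsGeneralizedBoundaryTriple (S St T Tt : H →ₗ.[ℂ] H)
    (Γ0 Γ1 : T.domain →ₗ[ℂ] G) (Γt0 Γt1 : Tt.domain →ₗ[ℂ] G) : Prop where
  dense_S : Dense (S.domain : Set H)
  dense_St : Dense (St.domain : Set H)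
  closed_S : S.IsClosed
  closed_St : St.IsClosed
  adjoint_pair : ∀ (f : S.domain) (g : St.domain),
    pinner (S f) (g : H) = pinner (f : H) (St g)
  T_le : T ≤ S.adjoint
  Tt_le : Tt ≤ St.adjoint
  T_adjoint : T.adjoint = S
  Tt_adjoint : Tt.adjoint = St
  green : ∀ (f : T.domain) (g : Tt.domain),
    pinner (T f) (g : H) - pinner (f : H) (Tt g)
      = pinner (Γ1 f) (Γt0 g) - pinner (Γ0 f) (Γt1 g)
  surj_Γ0 : Function.Surjective Γ0
  surj_Γt0 : Function.Surjective Γt0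
  A0_adjoint : (T.restrictTo (LinearMap.ker Γ0)).adjoint = Tt.restrictTo (LinearMap.ker Γt0)
  At0_adjoint : (Tt.restrictTo (LinearMap.ker Γt0)).adjoint = T.restrictTo (LinearMap.ker Γ0)

open Filter Topology

set_option linter.unusedSectionVars false

theorem mem_restrictTo_domain {T : H →ₗ.[ℂ] H} {p : Submodule ℂ T.domain} {y : T.domain}
    (hy : y ∈ p) : (y : H) ∈ (T.restrictTo p).domain :=
  ⟨y, hy, rfl⟩

theorem restrictTo_apply {T : H →ₗ.[ℂ] H} {p : Submodule ℂ T.domain} {y : T.domain}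
    (hy : y ∈ p) : T.restrictTo p ⟨y, mem_restrictTo_domain hy⟩ = T y := by
  have h : (Submodule.equivMapOfInjective T.domain.subtype (Submodule.injective_subtype _)
      p).symm ⟨y, mem_restrictTo_domain hy⟩ = ⟨y, hy⟩ := by
    rw [LinearEquiv.symm_apply_eq]
    rfl
  change T.toFun (p.subtype ((Submodule.equivMapOfInjective T.domain.subtype
    (Submodule.injective_subtype _) p).symm ⟨y, mem_restrictTo_domain hy⟩)) = T y
  rw [h]
  rfl

theorem exists_of_restrictTo {T : H →ₗ.[ℂ] H} {p : Submodule ℂ T.domain}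
    (x : (T.restrictTo p).domain) :
    ∃ y : T.domain, y ∈ p ∧ (y : H) = x ∧ T.restrictTo p x = T y := by
  obtain ⟨x, y, hy, rfl⟩ := x
  exact ⟨y, hy, rfl, restrictTo_apply hy⟩

theorem resolventAt_restrictTo_iff {T : H →ₗ.[ℂ] H} {p : Submodule ℂ T.domain} {lam : ℂ}
    {R : H →L[ℂ] H} :
    ResolventAt (T.restrictTo p) lam R ↔
      (∀ y ∈ p, R (T y - lam • (y : H)) = y) ∧
      ∀ f : H, ∃ y ∈ p, (y : H) = R f ∧ T y - lam • (y : H) = f := by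
  refine and_congr ⟨fun h y hy => ?_, fun h x => ?_⟩ (forall_congr' fun f => ⟨?_, ?_⟩)
  · simpa only [restrictTo_apply hy] using h ⟨y, mem_restrictTo_domain hy⟩
  · obtain ⟨y, hy, hyx, hT⟩ := exists_of_restrictTo x
    rw [hT, ← hyx, h y hy]
  · rintro ⟨x, hx, hxf⟩
    obtain ⟨y, hy, hyx, hT⟩ := exists_of_restrictTo x
    exact ⟨y, hy, hyx.trans hx, by rw [hyx, ← hT, hxf]⟩
  · rintro ⟨y, hy, hyR, hyf⟩
    exact ⟨⟨y, mem_restrictTo_domain hy⟩, hyR, by rw [restrictTo_apply hy]; exact hyf⟩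

/-- The graph of `A` is the set of all `(x, y)` with `R (y - lam • x) = x`. -/
theorem ResolventAt.isClosed {A : H →ₗ.[ℂ] H} {lam : ℂ} {R : H →L[ℂ] H}
    (hR : ResolventAt A lam R) : A.IsClosed := by
  have h : (A.graph : Set (H × H)) = {p | R (p.2 - lam • p.1) = p.1} := by
    ext ⟨a, b⟩
    simp only [SetLike.mem_coe, LinearPMap.mem_graph_iff, Set.mem_ofPred_eq]
    constructor
    · rintro ⟨x, rfl, rfl⟩
      exact hR.1 x
    · intro hab
      obtain ⟨x, hx, hxf⟩ := hR.2 (b - lam • a)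
      rw [hab] at hx
      rw [hx] at hxf
      exact ⟨x, hx, sub_left_injective hxf⟩
  change _root_.IsClosed (A.graph : Set (H × H))
  rw [h]
  exact isClosed_eq (by fun_prop) (by fun_prop)

/-- If `A` has a resolvent and `A`, `At` are adjoints of each other, then `At` is densely defined.
`LinearPMap.adjoint` acts as zero for an operator that is not densely defined; in that case `A`
would be the zero operator, everywhere defined by surjectivity of `A - lam`, and its adjoint `At`
would be everywhere defined as well. -/
theorem dense_of_adjoint {A At : H →ₗ.[ℂ] H} {lam : ℂ} {R : H →L[ℂ] H}
    (hR : ResolventAt A lam R) (h1 : A.adjoint = At) (h2 : At.adjoint = A) :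
    Dense (At.domain : Set H) := by
  by_contra hd
  have hA : ∀ x : A.domain, A x = 0 := by
    subst h2
    exact LinearPMap.adjoint_apply_of_not_dense hd
  apply hd
  have htop : ∀ y : H, y ∈ At.domain := by
    intro y
    rw [← h1]
    refine LinearPMap.mem_adjoint_domain_of_exists y ⟨0, fun x => ?_⟩
    rw [hA x, inner_zero_left, inner_zero_right]
  intro y
  exact subset_closure (htop y)

/-- `A0 - lam` is injective on `ker Γ0`. -/
theorem eq_zero_of_resolvent {T : H →ₗ.[ℂ] H} {Γ0 : T.domain →ₗ[ℂ] G} {lam : ℂ} {R : H →L[ℂ] H}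
    (hR : ResolventAt (T.restrictTo (LinearMap.ker Γ0)) lam R) {x : T.domain}
    (h0 : Γ0 x = 0) (hx : T x = lam • (x : H)) : x = 0 := by
  have h := (resolventAt_restrictTo_iff.1 hR).1 x h0
  rw [hx, sub_self, map_zero] at h
  exact Subtype.ext h.symm

/-- Two solutions of `(T - lam) x = f`, one of them in `ker Γ0`, differ by the value of the
`γ`-field at `Γ0 x`. -/
theorem sub_eq_gamma {T : H →ₗ.[ℂ] H} {Γ0 : T.domain →ₗ[ℂ] G} {lam : ℂ} {R : H →L[ℂ] H}
    (hR : ResolventAt (T.restrictTo (LinearMap.ker Γ0)) lam R) {gam : G → T.domain}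
    (hgam : ∀ k : G, T (gam k) = lam • (gam k : H) ∧ Γ0 (gam k) = k)
    {x u : T.domain} (hu : Γ0 u = 0)
    (hxu : T x - lam • (x : H) = T u - lam • (u : H)) : x = u + gam (Γ0 x) := by
  have h : x - (u + gam (Γ0 x)) = 0 := by
    apply eq_zero_of_resolvent hR
    · rw [map_sub, map_add, hu, (hgam _).2, zero_add, sub_self]
    · rw [LinearPMap.map_sub, LinearPMap.map_add, (hgam _).1]
      have h' : T x = T u - lam • (u : H) + lam • (x : H) := by rw [← hxu]; abel
      rw [h']
      push_cast
      module
  exact sub_eq_zero.1 h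

/-- For `u ∈ ker Γ0` with `Γ1 u ∈ dom B` the boundary condition for `u + γ h` is
`h - B M h = B Γ1 u`. -/
theorem mem_bc_iff {T : H →ₗ.[ℂ] H} {Γ0 Γ1 : T.domain →ₗ[ℂ] G} {B : G →ₗ.[ℂ] G}
    {u g : T.domain} {h : G} (hg : Γ0 g = h) (hu0 : Γ0 u = 0) (hu : Γ1 u ∈ B.domain) :
    u + g ∈ Submodule.comap (Γ1.prod Γ0) B.graph ↔
      ∃ hm : Γ1 g ∈ B.domain, h - B ⟨Γ1 g, hm⟩ = B ⟨Γ1 u, hu⟩ := by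
  have hc : u + g ∈ Submodule.comap (Γ1.prod Γ0) B.graph ↔ (Γ1 u + Γ1 g, h) ∈ B.graph := by
    change (Γ1 (u + g), Γ0 (u + g)) ∈ B.graph ↔ _
    rw [map_add, map_add, hg, hu0, zero_add]
  rw [hc]
  constructor
  · intro hm
    have hm' : (Γ1 g, h - B ⟨Γ1 u, hu⟩) ∈ B.graph := by
      simpa using B.graph.sub_mem hm (B.mem_graph ⟨Γ1 u, hu⟩)
    have hd : Γ1 g ∈ B.domain := LinearPMap.mem_domain_iff.2 ⟨_, hm'⟩
    refine ⟨hd, ?_⟩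
    rw [← (LinearPMap.image_iff hd).2 hm', sub_sub_cancel]
  · rintro ⟨hm, he⟩
    have := B.graph.add_mem (B.mem_graph ⟨Γ1 u, hu⟩) (B.mem_graph ⟨Γ1 g, hm⟩)
    rw [← he] at this
    simpa using this

/-- The resolvent `(A0 - lam)⁻¹` as a linear map into `dom T`. -/
def resolventLift {T : H →ₗ.[ℂ] H} {Γ0 : T.domain →ₗ[ℂ] G} {lam : ℂ} {R : H →L[ℂ] H}
    (hR : ResolventAt (T.restrictTo (LinearMap.ker Γ0)) lam R) : H →ₗ[ℂ] T.domain :=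
  R.toLinearMap.codRestrict T.domain fun f => by
    obtain ⟨y, -, hy, -⟩ := (resolventAt_restrictTo_iff.1 hR).2 f
    exact hy ▸ y.2

theorem resolventLift_spec {T : H →ₗ.[ℂ] H} {Γ0 : T.domain →ₗ[ℂ] G} {lam : ℂ} {R : H →L[ℂ] H}
    (hR : ResolventAt (T.restrictTo (LinearMap.ker Γ0)) lam R) (f : H) :
    (resolventLift hR f : H) = R f ∧ Γ0 (resolventLift hR f) = 0 ∧
      T (resolventLift hR f) = f + lam • R f := by
  obtain ⟨y, hy0, hy, hyf⟩ := (resolventAt_restrictTo_iff.1 hR).2 f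
  have h : resolventLift hR f = y := Subtype.ext hy.symm
  rw [h]
  exact ⟨hy, hy0, by rw [← hy, ← hyf]; abel⟩

/-- `Γ1 (A0 - lam)⁻¹` is bounded: Green's identity on `ker Γ0 × dom Tt` reads
`(T u, v) - (u, Tt v) = (Γ1 u, Γt0 v)`, and passing to the limit identifies any limit of
`Γ1 u` since `Γt0` is onto. -/
theorem continuous_gamma1_resolvent {S St T Tt : H →ₗ.[ℂ] H}
    {Γ0 Γ1 : T.domain →ₗ[ℂ] G} {Γt0 Γt1 : Tt.domain →ₗ[ℂ] G}
    (hgbt : IsGeneralizedBoundaryTriple S St T Tt Γ0 Γ1 Γt0 Γt1) {lam : ℂ} {R : H →L[ℂ] H}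
    (hR : ResolventAt (T.restrictTo (LinearMap.ker Γ0)) lam R) :
    Continuous (Γ1 ∘ₗ resolventLift hR) := by
  refine LinearMap.continuous_of_seq_closed_graph _ fun a f k ha hk => ?_
  refine ext_inner_left ℂ fun w => ?_
  obtain ⟨v, rfl⟩ := hgbt.surj_Γt0 w
  have green : ∀ f : H, ⟪(v : H), f + lam • R f⟫ - ⟪Tt v, R f⟫
      = ⟪Γt0 v, (Γ1 ∘ₗ resolventLift hR) f⟫ := by
    intro f
    obtain ⟨h1, h2, h3⟩ := resolventLift_spec hR f
    have h := hgbt.green (resolventLift hR f) v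
    simpa only [pinner, h1, h2, h3, inner_zero_right, sub_zero, LinearMap.comp_apply] using h
  have hl : Tendsto (fun n => ⟪Γt0 v, (Γ1 ∘ₗ resolventLift hR) (a n)⟫) atTop
      (𝓝 ⟪Γt0 v, (Γ1 ∘ₗ resolventLift hR) f⟫) := by
    simp only [← green]
    have hc : Continuous fun f : H => ⟪(v : H), f + lam • R f⟫ - ⟪Tt v, R f⟫ := by fun_prop
    exact (hc.tendsto f).comp ha
  exact tendsto_nhds_unique (tendsto_const_nhds.inner hk) hl

/-- The everywhere defined operator `B Γ1 (A0 - lam)⁻¹`. -/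
def boundaryResolvent {T : H →ₗ.[ℂ] H} {Γ0 Γ1 : T.domain →ₗ[ℂ] G} {B : G →ₗ.[ℂ] G}
    (hran : ∀ f : T.domain, Γ0 f = 0 → Γ1 f ∈ B.domain) {lam : ℂ} {R : H →L[ℂ] H}
    (hR : ResolventAt (T.restrictTo (LinearMap.ker Γ0)) lam R) : H →ₗ[ℂ] G :=
  B.toFun ∘ₗ (Γ1 ∘ₗ resolventLift hR).codRestrict B.domain
    fun f => hran _ (resolventLift_spec hR f).2.1

theorem boundaryResolvent_apply {T : H →ₗ.[ℂ] H} {Γ0 Γ1 : T.domain →ₗ[ℂ] G} {B : G →ₗ.[ℂ] G}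
    (hran : ∀ f : T.domain, Γ0 f = 0 → Γ1 f ∈ B.domain) {lam : ℂ} {R : H →L[ℂ] H}
    (hR : ResolventAt (T.restrictTo (LinearMap.ker Γ0)) lam R) (f : H) :
    boundaryResolvent hran hR f =
      B ⟨Γ1 (resolventLift hR f), hran _ (resolventLift_spec hR f).2.1⟩ :=
  rfl

theorem continuous_B_gamma1_resolvent {S St T Tt : H →ₗ.[ℂ] H}
    {Γ0 Γ1 : T.domain →ₗ[ℂ] G} {Γt0 Γt1 : Tt.domain →ₗ[ℂ] G}
    (hgbt : IsGeneralizedBoundaryTriple S St T Tt Γ0 Γ1 Γt0 Γt1) {B : G →ₗ.[ℂ] G}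
    (hB : B.IsClosable) (hran : ∀ f : T.domain, Γ0 f = 0 → Γ1 f ∈ B.domain)
    {lam : ℂ} {R : H →L[ℂ] H}
    (hR : ResolventAt (T.restrictTo (LinearMap.ker Γ0)) lam R) :
    Continuous (boundaryResolvent hran hR) := by
  refine LinearMap.continuous_of_seq_closed_graph _ fun a f k ha hk => ?_
  obtain ⟨B', hB'⟩ := hB
  have hmem : ∀ f, ((Γ1 ∘ₗ resolventLift hR) f, boundaryResolvent hran hR f) ∈ B.graph :=
    fun f => B.mem_graph ⟨Γ1 (resolventLift hR f), hran _ (resolventLift_spec hR f).2.1⟩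
  have h1 : ((Γ1 ∘ₗ resolventLift hR) f, boundaryResolvent hran hR f) ∈ B'.graph := by
    rw [← hB']
    exact B.graph.le_topologicalClosure (hmem f)
  have h2 : ((Γ1 ∘ₗ resolventLift hR) f, k) ∈ B'.graph := by
    rw [← hB']
    have hlim := (((continuous_gamma1_resolvent hgbt hR).tendsto f).comp ha).prodMk_nhds hk
    exact mem_closure_of_tendsto hlim (Eventually.of_forall fun n => hmem (a n))
  exact B'.mem_graph_snd_inj h2 h1 rfl

/-- The `γ`-field is linear since `Γ0` is injective on `ker (T - lam)`. -/
def gammaLin {T : H →ₗ.[ℂ] H} {Γ0 : T.domain →ₗ[ℂ] G} {lam : ℂ} {R : H →L[ℂ] H}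
    (hR : ResolventAt (T.restrictTo (LinearMap.ker Γ0)) lam R) {gam : G → T.domain}
    (hgam : ∀ k : G, T (gam k) = lam • (gam k : H) ∧ Γ0 (gam k) = k) : G →ₗ[ℂ] T.domain where
  toFun := gam
  map_add' a b := by
    refine sub_eq_zero.1 (eq_zero_of_resolvent hR ?_ ?_)
    · simp only [map_sub, map_add, (hgam _).2, sub_self]
    · simp only [LinearPMap.map_sub, LinearPMap.map_add, (hgam _).1]
      push_cast
      module
  map_smul' c a := by
    refine sub_eq_zero.1 (eq_zero_of_resolvent hR ?_ ?_)
    · simp only [map_sub, map_smul, (hgam _).2, RingHom.id_apply, sub_self]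
    · simp only [LinearPMap.map_sub, LinearPMap.map_smul, (hgam _).1, RingHom.id_apply]
      push_cast
      module

/-- The `γ`-field is bounded: if `h n → h` and `γ (h n) → x`, then Green's identity on
`ker Γt0` shows `x - γ h ∈ dom (Ã0)* = dom A0` with `(A0 - lam) (x - γ h) = 0`. -/
theorem continuous_gamma {S St T Tt : H →ₗ.[ℂ] H}
    {Γ0 Γ1 : T.domain →ₗ[ℂ] G} {Γt0 Γt1 : Tt.domain →ₗ[ℂ] G}
    (hgbt : IsGeneralizedBoundaryTriple S St T Tt Γ0 Γ1 Γt0 Γt1) {lam : ℂ} {R : H →L[ℂ] H}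
    (hR : ResolventAt (T.restrictTo (LinearMap.ker Γ0)) lam R) {gam : G → T.domain}
    (hgam : ∀ k : G, T (gam k) = lam • (gam k : H) ∧ Γ0 (gam k) = k) :
    Continuous (T.domain.subtype ∘ₗ gammaLin hR hgam) := by
  refine LinearMap.continuous_of_seq_closed_graph _ fun a h x ha hx => ?_
  change x = (gam h : H)
  replace hx : Tendsto (fun n => (gam (a n) : H)) atTop (𝓝 x) := hx
  have green : ∀ (k : G) (v : Tt.domain), Γt0 v = 0 →
      ⟪(v : H), lam • (gam k : H)⟫ - ⟪Tt v, (gam k : H)⟫ = -⟪Γt1 v, k⟫ := by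
    intro k v hv
    have h := hgbt.green (gam k) v
    simpa only [pinner, (hgam k).1, (hgam k).2, hv, inner_zero_left, zero_sub] using h
  have hlim : ∀ v : Tt.domain, Γt0 v = 0 →
      ⟪(v : H), lam • x⟫ - ⟪Tt v, x⟫ = -⟪Γt1 v, h⟫ := by
    intro v hv
    have hc : Continuous fun x : H => ⟪(v : H), lam • x⟫ - ⟪Tt v, x⟫ := by fun_prop
    have hc' : Continuous fun k : G => -⟪Γt1 v, k⟫ := by fun_prop
    refine tendsto_nhds_unique ((hc.tendsto x).comp hx) ?_
    refine ((hc'.tendsto h).comp ha).congr fun n => ?_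
    exact (green (a n) v hv).symm
  have hadj : ∀ v : (Tt.restrictTo (LinearMap.ker Γt0)).domain,
      ⟪lam • (x - gam h), (v : H)⟫ = ⟪x - gam h, Tt.restrictTo (LinearMap.ker Γt0) v⟫ := by
    intro v
    obtain ⟨w, hw0, hw, hT⟩ := exists_of_restrictTo v
    rw [hT, ← hw, ← inner_conj_symm, ← inner_conj_symm (x - (gam h : H))]
    congr 1
    have e1 := hlim w hw0
    have e2 := green h w hw0
    rw [smul_sub, inner_sub_right, inner_sub_right]
    linear_combination e1 - e2
  have hdense := dense_of_adjoint hR hgbt.A0_adjoint hgbt.At0_adjoint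
  have hmem := LinearPMap.mem_adjoint_domain_of_exists (x - (gam h : H)) ⟨_, hadj⟩
  have hval := LinearPMap.adjoint_apply_eq hdense ⟨_, hmem⟩ hadj
  have hgr : (x - (gam h : H), lam • (x - (gam h : H))) ∈
      (T.restrictTo (LinearMap.ker Γ0)).graph := by
    rw [← hgbt.At0_adjoint, LinearPMap.mem_graph_iff]
    exact ⟨⟨_, hmem⟩, rfl, hval⟩
  obtain ⟨y, hy, hAy⟩ := (LinearPMap.mem_graph_iff _).1 hgr
  have h0 := hR.1 y
  simp only at hy hAy
  rw [hAy, hy, sub_self, map_zero] at h0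
  exact sub_eq_zero.1 h0.symm

theorem stmt16
    (S St T Tt : H →ₗ.[ℂ] H)
    (Γ0 Γ1 : T.domain →ₗ[ℂ] G) (Γt0 Γt1 : Tt.domain →ₗ[ℂ] G)
    (hgbt : IsGeneralizedBoundaryTriple S St T Tt Γ0 Γ1 Γt0 Γt1)
    (B : G →ₗ.[ℂ] G) (hBclosable : B.IsClosable)
    (hran : ∀ f : T.domain, Γ0 f = 0 → Γ1 f ∈ B.domain)
    (lam0 : ℂ)
    (hlam0 : InResolventSet (T.restrictTo (LinearMap.ker Γ0)) lam0)
    (gam0 : G → T.domain)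
    (hgam0 : ∀ h : G, T (gam0 h) = lam0 • ((gam0 h : H)) ∧ Γ0 (gam0 h) = h)
    (hinj : ∀ (h h' : G) (hm : Γ1 (gam0 h) ∈ B.domain) (hm' : Γ1 (gam0 h') ∈ B.domain),
      h - B ⟨Γ1 (gam0 h), hm⟩ = h' - B ⟨Γ1 (gam0 h'), hm'⟩ → h = h')
    (hsurj : ∀ k : G, ∃ h : G, ∃ hm : Γ1 (gam0 h) ∈ B.domain,
      h - B ⟨Γ1 (gam0 h), hm⟩ = k)
    (hbddinv : ∃ C : ℝ, ∀ (h : G) (hm : Γ1 (gam0 h) ∈ B.domain),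
      ‖h‖ ≤ C * ‖h - B ⟨Γ1 (gam0 h), hm⟩‖) :
    (T.restrictTo (Submodule.comap (Γ1.prod Γ0) B.graph)).IsClosed ∧
    InResolventSet (T.restrictTo (Submodule.comap (Γ1.prod Γ0) B.graph)) lam0 ∧
    (∀ (lam : ℂ) (RB : H →L[ℂ] H),
      InResolventSet (T.restrictTo (LinearMap.ker Γ0)) lam →
      ResolventAt (T.restrictTo (Submodule.comap (Γ1.prod Γ0) B.graph)) lam RB →
      ∀ gam : G → T.domain,
        (∀ k : G, T (gam k) = lam • ((gam k : H)) ∧ Γ0 (gam k) = k) →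
        ∀ (f : H) (u : T.domain), Γ0 u = 0 → T u - lam • (u : H) = f →
          ∃ hu : Γ1 u ∈ B.domain,
            (∃! h : G, ∃ hm : Γ1 (gam h) ∈ B.domain,
              h - B ⟨Γ1 (gam h), hm⟩ = B ⟨Γ1 u, hu⟩) ∧
            ∀ (h : G) (hm : Γ1 (gam h) ∈ B.domain),
              h - B ⟨Γ1 (gam h), hm⟩ = B ⟨Γ1 u, hu⟩ →
              RB f = (u : H) + ((gam h : H))) := by
  obtain ⟨R0, hR0⟩ := hlam0
  -- `Ninv` is the bounded inverse of `1 - B M(lam0)`.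
  obtain ⟨Ninv, hNinv⟩ : ∃ N : G →L[ℂ] G, ∀ k : G, ∃ hm : Γ1 (gam0 (N k)) ∈ B.domain,
      N k - B ⟨Γ1 (gam0 (N k)), hm⟩ = k := by
    choose N hm hN using hsurj
    obtain ⟨C, hC⟩ := hbddinv
    have hgr : ∀ k, (Γ1 (gammaLin hR0 hgam0 (N k)), N k - k) ∈ B.graph := by
      intro k
      refine (LinearPMap.image_iff (hm k)).1 ?_
      rw [sub_eq_iff_eq_add, ← sub_eq_iff_eq_add']
      exact hN k
    have huniq : ∀ h k, (Γ1 (gammaLin hR0 hgam0 h), h - k) ∈ B.graph → N k = h := by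
      intro h k hg
      have hd : Γ1 (gam0 h) ∈ B.domain := LinearPMap.mem_domain_iff.2 ⟨_, hg⟩
      refine hinj _ _ (hm k) hd ?_
      rw [hN k, ← (LinearPMap.image_iff hd).2 hg, sub_sub_cancel]
    let NL : G →ₗ[ℂ] G :=
      { toFun := N
        map_add' := fun a b => huniq _ _ (by
          have := B.graph.add_mem (hgr a) (hgr b)
          rw [Prod.mk_add_mk, ← map_add, ← map_add] at this
          convert this using 2
          abel)
        map_smul' := fun c a => huniq _ _ (by
          have := B.graph.smul_mem c (hgr a)
          rw [Prod.smul_mk, ← map_smul, ← map_smul, smul_sub] at this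
          exact this) }
    refine ⟨NL.mkContinuous C fun k => ?_, fun k => ⟨hm k, hN k⟩⟩
    have := hC (N k) (hm k)
    rwa [hN k] at this
  -- `A_B - lam0` is injective.
  have hABinj : ∀ x ∈ Submodule.comap (Γ1.prod Γ0) B.graph,
      T x - lam0 • (x : H) = 0 → x = 0 := by
    intro x hx hTx
    have hxg : x = 0 + gam0 (Γ0 x) :=
      sub_eq_gamma hR0 hgam0 (map_zero Γ0) (by simpa using hTx)
    have hz : Γ1 (0 : T.domain) ∈ B.domain := by rw [map_zero]; exact B.domain.zero_mem
    rw [hxg, mem_bc_iff (hgam0 _).2 (map_zero Γ0) hz] at hx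
    obtain ⟨hm, he⟩ := hx
    have hg0 : gam0 0 = 0 := map_zero (gammaLin hR0 hgam0)
    have hm0 : Γ1 (gam0 0) ∈ B.domain := by rw [hg0]; exact hz
    have hB0 : ∀ (y : G) (hy : y ∈ B.domain), y = 0 → B ⟨y, hy⟩ = 0 := by
      rintro y hy rfl
      exact B.map_zero
    have h0 : Γ0 x = 0 := by
      refine hinj _ _ hm hm0 ?_
      rw [he, hB0 _ hz (map_zero Γ1), hB0 _ hm0 (by rw [hg0, map_zero]), sub_zero]
    rw [hxg, h0, hg0, zero_add]
  let P : H →L[ℂ] G :=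
    ⟨boundaryResolvent hran hR0, continuous_B_gamma1_resolvent hgbt hBclosable hran hR0⟩
  let gL : G →L[ℂ] H :=
    ⟨T.domain.subtype ∘ₗ gammaLin hR0 hgam0, continuous_gamma hgbt hR0 hgam0⟩
  let RB0 : H →L[ℂ] H := R0 + gL ∘L Ninv ∘L P
  have hex : ∀ f : H, ∃ y ∈ Submodule.comap (Γ1.prod Γ0) B.graph,
      (y : H) = RB0 f ∧ T y - lam0 • (y : H) = f := by
    intro f
    obtain ⟨h1, h2, h3⟩ := resolventLift_spec hR0 f
    refine ⟨resolventLift hR0 f + gam0 (Ninv (P f)), ?_, ?_, ?_⟩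
    · rw [mem_bc_iff (hgam0 _).2 h2 (hran _ h2)]
      exact hNinv (P f)
    · rw [Submodule.coe_add, h1]
      rfl
    · rw [LinearPMap.map_add, h3, (hgam0 _).1, Submodule.coe_add, h1]
      module
  have hRB0 : ResolventAt (T.restrictTo (Submodule.comap (Γ1.prod Γ0) B.graph)) lam0 RB0 := by
    refine resolventAt_restrictTo_iff.2 ⟨fun y hy => ?_, hex⟩
    obtain ⟨z, hz, hzR, hzf⟩ := hex (T y - lam0 • (y : H))
    have := hABinj (z - y) (Submodule.sub_mem _ hz hy) (by
      rw [LinearPMap.map_sub, Submodule.coe_sub, smul_sub, sub_sub_sub_comm, hzf, sub_self])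
    rw [← hzR, sub_eq_zero.1 this]
  refine ⟨hRB0.isClosed, ⟨RB0, hRB0⟩, ?_⟩
  rintro lam RB ⟨R, hR⟩ hRB gam hgam f u hu0 huf
  have hu := hran u hu0
  rw [resolventAt_restrictTo_iff] at hRB
  have key : ∀ (h : G) (hm : Γ1 (gam h) ∈ B.domain),
      h - B ⟨Γ1 (gam h), hm⟩ = B ⟨Γ1 u, hu⟩ → RB f = (u : H) + (gam h : H) := by
    intro h hm he
    have hmem := (mem_bc_iff (hgam h).2 hu0 hu).2 ⟨hm, he⟩
    have hs := hRB.1 _ hmem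
    have hf : T (u + gam h) - lam • ((u + gam h : T.domain) : H) = f := by
      rw [LinearPMap.map_add, (hgam h).1, ← huf, Submodule.coe_add]
      module
    rw [hf] at hs
    exact hs
  refine ⟨hu, ?_, key⟩
  obtain ⟨x, hx, hxR, hxf⟩ := hRB.2 f
  have hxg := sub_eq_gamma hR hgam hu0 (hxf.trans huf.symm)
  have hsol := hx
  rw [hxg, mem_bc_iff (hgam _).2 hu0 hu] at hsol
  refine ⟨Γ0 x, hsol, ?_⟩
  rintro h ⟨hm, he⟩
  have hxh : x = u + gam h := Subtype.ext (hxR.trans (key h hm he))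
  rw [hxh, map_add, hu0, (hgam h).2, zero_add]

end
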